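/- For every real k, the overlap integral A₂(k) = ∫_{-∞}^{∞} sin(√2 k ξ) tanh(ξ) sech⁴(ξ) dξ equals π k²(k²+2) / (6 sinh(πk/√2)), interpreted as 0 when k = 0. -/

import Mathlib

open Real MeasureTheory

noncomputable def sech (x : ℝ) : ℝ := (Real.cosh x)⁻¹

/-!
The substitution `t = sigmoid (2 * x)`, that is `t = exp x * sech x / 2` and
`1 - t = exp (-x) * sech x / 2`, turns Euler's Beta integral into the bilateral Laplace transform of
a power of `sech`: `∫ exp (z * x) * sech x ^ n` is `2 ^ (n - 1) * B((n + z) / 2, (n - z) / 2)`.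
Since `(sech ^ n)' = -n * tanh * sech ^ n`, integration by parts multiplies this by `z / n` when the
factor `tanh` is inserted. For `n = 4` the Beta value is `B(2 + w, 2 - w)` with `w = z / 2`, which
the recurrence and the reflection formula for `Gamma` express through `sin (π * w)`; the overlap
integral is read off at `z = ± √2 * k * I`.
-/

lemma sech_pos (x : ℝ) : 0 < sech x := inv_pos.2 (cosh_pos x)

lemma sech_neg (x : ℝ) : sech (-x) = sech x := by rw [sech, sech, cosh_neg]

lemma hasDerivAt_sech (x : ℝ) : HasDerivAt sech (-(tanh x * sech x)) x := by
  refine ((hasDerivAt_cosh x).inv (cosh_pos x).ne').congr_deriv ?_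
  rw [tanh_eq_sinh_div_cosh, sech]
  field_simp

lemma sigmoid_two_mul (x : ℝ) : sigmoid (2 * x) = exp x * (sech x / 2) := by
  rw [sech, cosh_eq, sigmoid_def, show -(2 * x) = -x + -x by ring, exp_add, exp_neg]
  field_simp

lemma one_sub_sigmoid_two_mul (x : ℝ) : 1 - sigmoid (2 * x) = exp (-x) * (sech x / 2) := by
  rw [← sigmoid_neg, ← mul_neg, sigmoid_two_mul, sech_neg]

lemma hasDerivAt_sigmoid_two_mul (x : ℝ) :
    HasDerivAt (fun y ↦ sigmoid (2 * y)) (sech x ^ 2 / 2) x := by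
  refine ((hasDerivAt_sigmoid (2 * x)).comp x (hasDerivAt_const_mul 2)).congr_deriv ?_
  rw [one_sub_sigmoid_two_mul, sigmoid_two_mul, exp_neg]
  field_simp

lemma monotone_sigmoid_two_mul : Monotone fun x : ℝ ↦ sigmoid (2 * x) :=
  sigmoid_monotone.comp (monotone_mul_left_of_nonneg zero_le_two)

lemma image_sigmoid_two_mul_univ : (fun x : ℝ ↦ sigmoid (2 * x)) '' Set.univ = Set.Ioo 0 1 := by
  rw [Set.image_univ, ← range_sigmoid]
  exact (mul_left_surjective₀ (two_ne_zero' ℝ)).range_comp sigmoid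

section ChangeOfVariables

variable {E : Type*} [NormedAddCommGroup E] [NormedSpace ℝ E] (f : ℝ → E)

lemma integrableOn_Ioo_zero_one_iff_integrable_comp_sigmoid_two_mul :
    IntegrableOn f (Set.Ioo 0 1) ↔
      Integrable fun x ↦ (sech x ^ 2 / 2) • f (sigmoid (2 * x)) := by
  rw [← image_sigmoid_two_mul_univ, integrableOn_image_iff_integrableOn_deriv_smul_of_monotoneOn
    MeasurableSet.univ (fun x _ ↦ (hasDerivAt_sigmoid_two_mul x).hasDerivWithinAt)
    (monotone_sigmoid_two_mul.monotoneOn _), integrableOn_univ]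

lemma integral_Ioo_zero_one_eq_integral_comp_sigmoid_two_mul :
    ∫ t in Set.Ioo 0 1, f t = ∫ x, (sech x ^ 2 / 2) • f (sigmoid (2 * x)) := by
  rw [← image_sigmoid_two_mul_univ, integral_image_eq_integral_deriv_smul_of_monotoneOn
    MeasurableSet.univ (fun x _ ↦ (hasDerivAt_sigmoid_two_mul x).hasDerivWithinAt)
    (monotone_sigmoid_two_mul.monotoneOn _), setIntegral_univ]

end ChangeOfVariables

lemma ofReal_exp_mul_cpow (x : ℝ) {r : ℝ} (hr : 0 < r) (s : ℂ) :
    ((rexp x * r : ℝ) : ℂ) ^ s = Complex.exp (s * x) * (r : ℂ) ^ s := by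
  rw [Complex.ofReal_mul, Complex.mul_cpow_ofReal_nonneg (exp_pos x).le hr.le,
    Complex.cpow_def_of_ne_zero (by simp), ← Complex.ofReal_log (exp_pos x).le, log_exp, mul_comm s]

lemma sech_sq_smul_sigmoid_cpow_mul_one_sub_sigmoid_cpow (u v : ℂ) (x : ℝ) :
    (sech x ^ 2 / 2) • ((sigmoid (2 * x) : ℂ) ^ (u - 1) * (1 - (sigmoid (2 * x) : ℂ)) ^ (v - 1)) =
      2 * (Complex.exp ((u - v) * x) * ((sech x / 2 : ℝ) : ℂ) ^ (u + v)) := by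
  have hpos : 0 < sech x / 2 := half_pos (sech_pos x)
  have hne : ((sech x / 2 : ℝ) : ℂ) ≠ 0 := Complex.ofReal_ne_zero.2 hpos.ne'
  have hexp : Complex.exp ((u - v) * x) =
      Complex.exp ((u - 1) * x) * Complex.exp ((v - 1) * (-x : ℝ)) := by
    rw [← Complex.exp_add]
    push_cast
    ring_nf
  have hcpow : ((sech x / 2 : ℝ) : ℂ) ^ (u + v) =
      ((sech x / 2 : ℝ) : ℂ) ^ (u - 1) * ((sech x / 2 : ℝ) : ℂ) ^ (v - 1) *
        ((sech x / 2 : ℝ) : ℂ) ^ 2 := by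
    rw [← Complex.cpow_add _ _ hne, ← Complex.cpow_ofNat, ← Complex.cpow_add _ _ hne]
    ring_nf
  rw [← Complex.ofReal_one, ← Complex.ofReal_sub, one_sub_sigmoid_two_mul, sigmoid_two_mul,
    ofReal_exp_mul_cpow _ hpos, ofReal_exp_mul_cpow _ hpos, Complex.ofReal_one, hexp, hcpow,
    Complex.real_smul]
  push_cast
  ring

lemma integrable_cexp_mul_sech_half_cpow {u v : ℂ} (hu : 0 < u.re) (hv : 0 < v.re) :
    Integrable fun x : ℝ ↦ Complex.exp ((u - v) * x) * ((sech x / 2 : ℝ) : ℂ) ^ (u + v) := by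
  have hbeta := Complex.betaIntegral_convergent hu hv
  rw [intervalIntegrable_iff_integrableOn_Ioo_of_le zero_le_one,
    integrableOn_Ioo_zero_one_iff_integrable_comp_sigmoid_two_mul] at hbeta
  simp_rw [sech_sq_smul_sigmoid_cpow_mul_one_sub_sigmoid_cpow] at hbeta
  exact (integrable_const_mul_iff (IsUnit.mk0 2 two_ne_zero) _).1 hbeta

lemma betaIntegral_eq_integral_cexp_mul_sech_half_cpow (u v : ℂ) :
    Complex.betaIntegral u v =
      2 * ∫ x : ℝ, Complex.exp ((u - v) * x) * ((sech x / 2 : ℝ) : ℂ) ^ (u + v) := by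
  rw [Complex.betaIntegral, intervalIntegral.integral_of_le zero_le_one,
    integral_Ioc_eq_integral_Ioo, integral_Ioo_zero_one_eq_integral_comp_sigmoid_two_mul]
  simp_rw [sech_sq_smul_sigmoid_cpow_mul_one_sub_sigmoid_cpow, integral_const_mul]

lemma cexp_mul_sech_pow_eq_mul_sech_half_cpow (n : ℕ) (z : ℂ) (x : ℝ) :
    Complex.exp (z * x) * sech x ^ n =
      2 ^ n * (Complex.exp (((n + z) / 2 - (n - z) / 2) * x) *
        ((sech x / 2 : ℝ) : ℂ) ^ ((n + z) / 2 + (n - z) / 2)) := by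
  rw [show (n + z) / 2 - (n - z) / 2 = z by ring, show (n + z) / 2 + (n - z) / 2 = n by ring,
    Complex.cpow_natCast, Complex.ofReal_div, Complex.ofReal_ofNat, div_pow]
  field_simp

lemma integrable_cexp_mul_sech_pow {n : ℕ} {z : ℂ} (hz : |z.re| < n) :
    Integrable fun x : ℝ ↦ Complex.exp (z * x) * sech x ^ n := by
  obtain ⟨hneg, hpos⟩ := abs_lt.1 hz
  simp_rw [cexp_mul_sech_pow_eq_mul_sech_half_cpow]
  refine (integrable_cexp_mul_sech_half_cpow ?_ ?_).const_mul _
  · rw [Complex.div_ofNat_re, Complex.add_re, Complex.natCast_re]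
    linarith
  · rw [Complex.div_ofNat_re, Complex.sub_re, Complex.natCast_re]
    linarith

lemma integral_cexp_mul_sech_pow (n : ℕ) (z : ℂ) :
    ∫ x : ℝ, Complex.exp (z * x) * sech x ^ n =
      2 ^ n / 2 * Complex.betaIntegral ((n + z) / 2) ((n - z) / 2) := by
  simp_rw [cexp_mul_sech_pow_eq_mul_sech_half_cpow, integral_const_mul,
    betaIntegral_eq_integral_cexp_mul_sech_half_cpow]
  ring

lemma hasDerivAt_cexp_mul_sech_pow (n : ℕ) (z : ℂ) (x : ℝ) :
    HasDerivAt (fun y : ℝ ↦ Complex.exp (z * y) * sech y ^ n)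
      (z * (Complex.exp (z * x) * sech x ^ n) -
        n * (Complex.exp (z * x) * tanh x * sech x ^ n)) x := by
  have hexp : HasDerivAt (fun y : ℝ ↦ Complex.exp (z * y)) (Complex.exp (z * x) * z) x :=
    ((hasDerivAt_const_mul z).cexp).comp_ofReal
  have hsech := (hasDerivAt_sech x).ofReal_comp.fun_pow n
  refine (hexp.mul hsech).congr_deriv ?_
  cases n with
  | zero => simp [mul_comm]
  | succ m =>
    push_cast [Nat.add_sub_cancel]
    ring

lemma integrable_cexp_mul_tanh_mul_sech_pow {n : ℕ} {z : ℂ} (hz : |z.re| < n) :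
    Integrable fun x : ℝ ↦ Complex.exp (z * x) * tanh x * sech x ^ n := by
  have htanh : Continuous tanh := by
    simp_rw [funext tanh_eq_sinh_div_cosh]
    exact continuous_sinh.div continuous_cosh fun x ↦ (cosh_pos x).ne'
  have hbound (x : ℝ) : ‖(tanh x : ℂ)‖ ≤ 1 := by
    rw [Complex.norm_real]
    exact (abs_tanh_lt_one x).le
  refine ((integrable_cexp_mul_sech_pow hz).bdd_mul
    (Complex.continuous_ofReal.comp htanh).aestronglyMeasurable
    (.of_forall hbound)).congr (.of_forall fun x ↦ ?_)
  simp only [Function.comp_apply]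
  ring

lemma natCast_mul_integral_cexp_mul_tanh_mul_sech_pow {n : ℕ} {z : ℂ} (hz : |z.re| < n) :
    n * ∫ x : ℝ, Complex.exp (z * x) * tanh x * sech x ^ n =
      z * ∫ x : ℝ, Complex.exp (z * x) * sech x ^ n := by
  have hsech := (integrable_cexp_mul_sech_pow hz).const_mul z
  have htanh := (integrable_cexp_mul_tanh_mul_sech_pow hz).const_mul (n : ℂ)
  have hderiv := integral_eq_zero_of_hasDerivAt_of_integrable
    (hasDerivAt_cexp_mul_sech_pow n z) (hsech.sub htanh) (integrable_cexp_mul_sech_pow hz)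
  rw [integral_sub hsech htanh, integral_const_mul, integral_const_mul] at hderiv
  exact (sub_eq_zero.1 hderiv).symm

lemma Gamma_two_add_mul_Gamma_two_sub {w : ℂ} (hw : Complex.sin (π * w) ≠ 0) :
    Complex.Gamma (2 + w) * Complex.Gamma (2 - w) =
      π * w * (1 - w ^ 2) / Complex.sin (π * w) := by
  have hw₀ : w ≠ 0 := by
    rintro rfl
    simp at hw
  have hw₁ : w + 1 ≠ 0 := by
    intro h
    simp [eq_neg_of_add_eq_zero_left h] at hw
  have hw₂ : 1 - w ≠ 0 := by
    intro h
    simp [← sub_eq_zero.1 h] at hw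
  rw [show 2 + w = (w + 1) + 1 by ring, show 2 - w = (1 - w) + 1 by ring,
    Complex.Gamma_add_one _ hw₁, Complex.Gamma_add_one _ hw₀, Complex.Gamma_add_one _ hw₂]
  linear_combination (w + 1) * w * (1 - w) * Complex.Gamma_mul_Gamma_one_sub w

lemma betaIntegral_two_add_two_sub {w : ℂ} (hre : |w.re| < 2) (hw : Complex.sin (π * w) ≠ 0) :
    Complex.betaIntegral (2 + w) (2 - w) = π * w * (1 - w ^ 2) / (6 * Complex.sin (π * w)) := by
  obtain ⟨hneg, hpos⟩ := abs_lt.1 hre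
  have hadd : 0 < (2 + w).re := by
    rw [Complex.add_re, Complex.re_ofNat]
    linarith
  have hsub : 0 < (2 - w).re := by
    rw [Complex.sub_re, Complex.re_ofNat]
    linarith
  have hGamma : Complex.Gamma 4 = 6 := by simp [Nat.factorial]
  rw [Complex.betaIntegral_eq_Gamma_mul_div _ _ hadd hsub, Gamma_two_add_mul_Gamma_two_sub hw,
    show 2 + w + (2 - w) = 4 by ring, hGamma]
  field_simp

lemma integral_cexp_mul_tanh_mul_sech_pow_four {z : ℂ} (hre : |z.re| < 4)
    (hz : Complex.sin (π * (z / 2)) ≠ 0) :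
    ∫ x : ℝ, Complex.exp (z * x) * tanh x * sech x ^ 4 =
      π * z ^ 2 * (4 - z ^ 2) / (24 * Complex.sin (π * (z / 2))) := by
  have hre_half : |(z / 2).re| < 2 := by
    rw [Complex.div_ofNat_re, abs_div, abs_two]
    linarith
  have hparts := natCast_mul_integral_cexp_mul_tanh_mul_sech_pow (n := 4) (by exact_mod_cast hre)
  rw [integral_cexp_mul_sech_pow, Nat.cast_ofNat, show (4 + z) / 2 = 2 + z / 2 by ring,
    show (4 - z) / 2 = 2 - z / 2 by ring, betaIntegral_two_add_two_sub hre_half hz] at hparts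
  linear_combination hparts / 4

lemma integral_csin_mul_tanh_mul_sech_pow_four {b : ℂ} (him : |b.im| < 4)
    (hb : Complex.sinh (π * (b / 2)) ≠ 0) :
    ∫ x : ℝ, Complex.sin (b * x) * tanh x * sech x ^ 4 =
      π * b ^ 2 * (4 + b ^ 2) / (24 * Complex.sinh (π * (b / 2))) := by
  have hre_pos : |(b * Complex.I).re| < 4 := by simpa using him
  have hre_neg : |(-b * Complex.I).re| < 4 := by simpa using him
  have hsin_pos : Complex.sin (π * (b * Complex.I / 2)) =
      Complex.sinh (π * (b / 2)) * Complex.I := by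
    rw [← Complex.sin_mul_I]
    ring_nf
  have hsin_neg : Complex.sin (π * (-b * Complex.I / 2)) =
      -(Complex.sinh (π * (b / 2)) * Complex.I) := by
    rw [← hsin_pos, ← Complex.sin_neg]
    ring_nf
  have hsinh_I := mul_ne_zero hb Complex.I_ne_zero
  calc ∫ x : ℝ, Complex.sin (b * x) * tanh x * sech x ^ 4
      = ∫ x : ℝ, Complex.I / 2 * (Complex.exp (-b * Complex.I * x) * tanh x * sech x ^ 4 -
          Complex.exp (b * Complex.I * x) * tanh x * sech x ^ 4) := by
        congr with x
        rw [Complex.sin, mul_right_comm b, mul_right_comm (-b), neg_mul b]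
        ring
    _ = Complex.I / 2 * ((∫ x : ℝ, Complex.exp (-b * Complex.I * x) * tanh x * sech x ^ 4) -
          ∫ x : ℝ, Complex.exp (b * Complex.I * x) * tanh x * sech x ^ 4) := by
        rw [integral_const_mul, integral_sub
          (integrable_cexp_mul_tanh_mul_sech_pow (by exact_mod_cast hre_neg))
          (integrable_cexp_mul_tanh_mul_sech_pow (by exact_mod_cast hre_pos))]
    _ = π * b ^ 2 * (4 + b ^ 2) / (24 * Complex.sinh (π * (b / 2))) := by
        rw [integral_cexp_mul_tanh_mul_sech_pow_four hre_neg (hsin_neg ▸ neg_ne_zero.2 hsinh_I),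
          integral_cexp_mul_tanh_mul_sech_pow_four hre_pos (hsin_pos ▸ hsinh_I),
          hsin_neg, hsin_pos, neg_mul, neg_sq, mul_pow, Complex.I_sq]
        field_simp
        ring

theorem A2_overlap_closed_form_general {k : ℂ} (him : |k.im| < 2 * √2)
    (hk : Complex.sinh (π * k / √2) ≠ 0) :
    ∫ ξ : ℝ, Complex.sin (√2 * k * ξ) * tanh ξ * sech ξ ^ 4 =
      π * k ^ 2 * (k ^ 2 + 2) / (6 * Complex.sinh (π * k / √2)) := by
  have hsq : (√2 : ℂ) ^ 2 = 2 := by exact_mod_cast sq_sqrt zero_le_two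
  have him' : |(√2 * k).im| < 4 := by
    rw [Complex.im_ofReal_mul, abs_mul, abs_of_pos (sqrt_pos.2 two_pos)]
    calc √2 * |k.im| < √2 * (2 * √2) := by gcongr
      _ = 4 := by rw [mul_left_comm, mul_self_sqrt zero_le_two]; norm_num
  have harg : π * k / √2 = π * (√2 * k / 2) := by
    have hsqrt : (√2 : ℂ) ≠ 0 := by simp
    field_simp
    rw [hsq]
  rw [harg] at hk ⊢
  rw [integral_csin_mul_tanh_mul_sech_pow_four him' hk, mul_pow, hsq]
  ring

theorem A2_overlap_closed_form (k : ℝ) :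
    ∫ ξ : ℝ, Real.sin (Real.sqrt 2 * k * ξ) * Real.tanh ξ * (sech ξ) ^ 4
      = if k = 0 then 0
        else Real.pi * k ^ 2 * (k ^ 2 + 2) / (6 * Real.sinh (Real.pi * k / Real.sqrt 2)) := by
  split_ifs with hk
  · simp [hk]
  have hsinh : sinh (π * k / √2) ≠ 0 := sinh_ne_zero.2 (by positivity)
  exact_mod_cast A2_overlap_closed_form_general (k := k) (by simp) (by exact_mod_cast hsinh)
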